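/- arXiv:1511.04190 — 2 statements merged into one kernel-verified Lean document; each statement's English description precedes it below -/
import Mathlib

section
/- Let G be a simple graph with vertex set {1,…,n} and edges e_1,…,e_m (each edge a 2-element set of vertices), and let k ≤ n. Identify candidates with vertices and, for each edge index i ∈ {1,…,m}, define the vote S_i = e_i (so every vote approves exactly two candidates). Then G contains a clique of size k if and only if there exist a committee C* ⊆ {1,…,n} with |C*| = k and an index set I ⊆ {1,…,m} with |I| ≥ k(k−1)/2 such that Σ_{i∈I} (|C* ∖ S_i| − |C* ∩ S_i|) ≤ (k−4)·k(k−1)/2 (as integers). -/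
/-!
Let every vote have size `r`. A vote contained in the committee `C` has score `#C - 2 * r`, and any
other vote scores at least `2` more. Put `K = (#C).choose r`, and suppose that at least `K` votes,
`a` of them inside `C` and `b` not, have total score at most `(#C - 2 * r) * K`. Then
`(#C - 2 * r) * (a + b - K) + 2 * b ≤ 0`, and since `a + b ≥ K`, the bound `#C - 2 * r ≥ -2` turns
this into `a ≥ K`. As distinct votes inside `C` are distinct `r`-subsets of `C`, of which there are
`K`, all of these subsets occur. For graphs `r = 2`, and the bound fails only if `#C < r`, when `C`
has no `r`-subsets.
-/

section UniformVotes

open Finset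

variable {α ι : Type*} [DecidableEq α] {C : Finset α} {I : Finset ι} {S : ι → Finset α} {r : ℕ}

/-- The net disapproval score `|C ∖ A| - |C ∩ A|` of the committee `C` under the approval vote
`A`, an integer which is negative when the vote approves most of `C`. -/
def netDisapproval (C A : Finset α) : ℤ :=
  (#(C \ A) : ℤ) - (#(C ∩ A) : ℤ)

theorem netDisapproval_eq_card_sub (C A : Finset α) :
    netDisapproval C A = #C - 2 * #(C ∩ A) := by
  have hsplit := card_sdiff_add_card_inter C A
  unfold netDisapproval
  lia

theorem netDisapproval_of_subset {A : Finset α} (hA : A ⊆ C) :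
    netDisapproval C A = #C - 2 * #A := by
  rw [netDisapproval_eq_card_sub, inter_eq_right.mpr hA]

theorem le_netDisapproval_of_not_subset {A : Finset α} (hA : ¬A ⊆ C) :
    (#C : ℤ) - 2 * #A + 2 ≤ netDisapproval C A := by
  have hlt : #(C ∩ A) < #A :=
    card_lt_card (inter_subset_right.ssubset_of_ne (mt inter_eq_right.mp hA))
  rw [netDisapproval_eq_card_sub]
  lia

theorem sum_netDisapproval_of_forall_subset (hcard : ∀ i ∈ I, #(S i) = r)
    (hsub : ∀ i ∈ I, S i ⊆ C) :
    ∑ i ∈ I, netDisapproval C (S i) = ((#C : ℤ) - 2 * r) * #I := by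
  have hscore : ∀ i ∈ I, netDisapproval C (S i) = (#C : ℤ) - 2 * r := fun i hi => by
    rw [netDisapproval_of_subset (hsub i hi), hcard i hi]
  rw [sum_congr rfl hscore, sum_const, nsmul_eq_mul, mul_comm]

theorem le_sum_netDisapproval (hcard : ∀ i ∈ I, #(S i) = r) :
    ((#C : ℤ) - 2 * r) * #I + 2 * #{i ∈ I | ¬S i ⊆ C} ≤ ∑ i ∈ I, netDisapproval C (S i) := by
  have hscore : ∀ i ∈ I,
      ((#C : ℤ) - 2 * r) + (if ¬S i ⊆ C then 2 else 0) ≤ netDisapproval C (S i) := by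
    intro i hi
    rw [← hcard i hi]
    split_ifs with hsub
    · rw [netDisapproval_of_subset hsub, add_zero]
    · exact le_netDisapproval_of_not_subset hsub
  calc ((#C : ℤ) - 2 * r) * #I + 2 * #{i ∈ I | ¬S i ⊆ C}
      = ∑ i ∈ I, (((#C : ℤ) - 2 * r) + (if ¬S i ⊆ C then 2 else 0)) := by
        rw [sum_add_distrib, sum_const, ← sum_filter, sum_const, nsmul_eq_mul, nsmul_eq_mul]
        ring
    _ ≤ ∑ i ∈ I, netDisapproval C (S i) := sum_le_sum hscore

theorem image_filter_subset_powersetCard (hcard : ∀ i ∈ I, #(S i) = r) :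
    {i ∈ I | S i ⊆ C}.image S ⊆ powersetCard r C := by
  intro A hA
  obtain ⟨i, hi, rfl⟩ := mem_image.mp hA
  obtain ⟨hiI, hiC⟩ := mem_filter.mp hi
  exact mem_powersetCard.mpr ⟨hiC, hcard i hiI⟩

theorem choose_le_card_filter_subset_of_sum_le (hcard : ∀ i ∈ I, #(S i) = r)
    (hr : 2 * r ≤ #C + 2) (hI : (#C).choose r ≤ #I)
    (hsum : ∑ i ∈ I, netDisapproval C (S i) ≤ ((#C : ℤ) - 2 * r) * (#C).choose r) :
    (#C).choose r ≤ #{i ∈ I | S i ⊆ C} := by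
  have hbound := (le_sum_netDisapproval hcard).trans hsum
  have hsplit := card_filter_add_card_filter_not (s := I) (fun i => S i ⊆ C)
  have hsurplus : (0 : ℤ) ≤ ((#C : ℤ) - 2 * r + 2) * (#I - (#C).choose r) :=
    mul_nonneg (by lia) (by lia)
  zify at hsplit ⊢
  linarith

theorem image_eq_powersetCard_of_sum_le (hcard : ∀ i ∈ I, #(S i) = r)
    (hinj : Set.InjOn S I) (hr : 2 * r ≤ #C + 2) (hI : (#C).choose r ≤ #I)
    (hsum : ∑ i ∈ I, netDisapproval C (S i) ≤ ((#C : ℤ) - 2 * r) * (#C).choose r) :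
    {i ∈ I | S i ⊆ C}.image S = powersetCard r C := by
  refine eq_of_subset_of_card_le (image_filter_subset_powersetCard hcard) ?_
  rw [card_powersetCard, card_image_of_injOn (hinj.mono (coe_subset.mpr (filter_subset _ _)))]
  exact choose_le_card_filter_subset_of_sum_le hcard hr hI hsum

theorem exists_sum_netDisapproval_le_of_powersetCard_subset_range
    (hC : (powersetCard r C : Set (Finset α)) ⊆ Set.range S) :
    ∃ I : Finset ι, (#C).choose r ≤ #I ∧
      ∑ i ∈ I, netDisapproval C (S i) ≤ ((#C : ℤ) - 2 * r) * (#C).choose r := by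
  obtain ⟨I, -, hinj, himage⟩ := exists_subset_injOn_image_eq_of_surjOn Set.univ (powersetCard r C)
    (by rwa [Set.SurjOn, Set.image_univ])
  have hI : #I = (#C).choose r := by
    rw [← card_powersetCard, ← himage, card_image_of_injOn hinj]
  have hmem : ∀ i ∈ I, S i ⊆ C ∧ #(S i) = r := fun i hi =>
    mem_powersetCard.mp (himage ▸ mem_image_of_mem S hi)
  refine ⟨I, hI.ge, le_of_eq ?_⟩
  rw [sum_netDisapproval_of_forall_subset (fun i hi => (hmem i hi).2) fun i hi => (hmem i hi).1, hI]

theorem powersetCard_subset_range_iff_exists_sum_netDisapproval_le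
    (hcard : ∀ i, #(S i) = r) (hinj : S.Injective) (hr : #C < r ∨ 2 * r ≤ #C + 2) :
    (powersetCard r C : Set (Finset α)) ⊆ Set.range S ↔
      ∃ I : Finset ι, (#C).choose r ≤ #I ∧
        ∑ i ∈ I, netDisapproval C (S i) ≤ ((#C : ℤ) - 2 * r) * (#C).choose r := by
  refine ⟨exists_sum_netDisapproval_le_of_powersetCard_subset_range, ?_⟩
  rintro ⟨I, hI, hsum⟩
  obtain hlt | hr := hr
  · simp only [powersetCard_eq_empty.mpr hlt, coe_empty, Set.empty_subset]
  · rw [← image_eq_powersetCard_of_sum_le (fun i _ => hcard i) hinj.injOn hr hI hsum, coe_image]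
    exact Set.image_subset_range _ _

theorem coe_powersetCard_two_subset_iff {W : Finset α} {E : Set (Finset α)} :
    (powersetCard 2 W : Set (Finset α)) ⊆ E ↔ ∀ u ∈ W, ∀ v ∈ W, u ≠ v → {u, v} ∈ E := by
  constructor
  · intro hE u hu v hv huv
    exact hE (mem_powersetCard.mpr ⟨insert_subset hu (singleton_subset_iff.mpr hv), card_pair huv⟩)
  · intro hE A hA
    obtain ⟨hAW, hA2⟩ := mem_powersetCard.mp hA
    obtain ⟨u, v, huv, rfl⟩ := card_eq_two.mp hA2
    exact hE u (hAW (mem_insert_self u {v})) v (hAW (mem_insert_of_mem (mem_singleton_self v))) huv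

theorem stmt_7_general {k : ℕ} (hcard : ∀ i, #(S i) = r) (hinj : S.Injective)
    (hr : k < r ∨ 2 * r ≤ k + 2) :
    (∃ W : Finset α, #W = k ∧ (powersetCard r W : Set (Finset α)) ⊆ Set.range S) ↔
      ∃ (C : Finset α) (I : Finset ι), #C = k ∧ k.choose r ≤ #I ∧
        ∑ i ∈ I, netDisapproval C (S i) ≤ ((k : ℤ) - 2 * r) * k.choose r := by
  simp only [exists_and_left]
  refine exists_congr fun C => and_congr_right ?_
  rintro rfl
  exact powersetCard_subset_range_iff_exists_sum_netDisapproval_le hcard hinj hr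

end UniformVotes

/-- `G` is a simple graph on vertices `Fin n`, given by its list of
distinct edges `e 1, …, e m` (each a 2-element set of vertices). Candidates are
vertices and the vote for edge index `i` is `e i` itself. Then `G` has a clique of
size `k` iff there are a committee `C` of size `k` and an index set `I` of size at
least `k(k-1)/2` with net disapproval score
`∑_{i ∈ I} (|C \ e i| - |C ∩ e i|) ≤ (k-4)·k(k-1)/2`. -/
theorem stmt_7 (n m k : ℕ) (hk : k ≤ n)
    (e : Fin m → Finset (Fin n))
    (he2 : ∀ i, (e i).card = 2)
    (hinj : Function.Injective e) :
    (∃ W : Finset (Fin n), W.card = k ∧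
        ∀ u ∈ W, ∀ v ∈ W, u ≠ v → ∃ i, e i = {u, v})
    ↔ ∃ (C : Finset (Fin n)) (I : Finset (Fin m)),
        C.card = k ∧ k * (k - 1) / 2 ≤ I.card ∧
        (∑ i ∈ I, (((C \ e i).card : ℤ) - ((C ∩ e i).card : ℤ)))
          ≤ ((k : ℤ) - 4) * ((k * (k - 1) / 2 : ℕ) : ℤ) := by
  simpa only [coe_powersetCard_two_subset_iff, Nat.choose_two_right, Set.mem_range, Nat.cast_ofNat,
    netDisapproval, Int.reduceMul] using stmt_7_general (k := k) he2 hinj (by lia)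
end

section
/- Let C be a candidate set of size m, let V* be a family of n* votes (subsets of C), and let m* be a committee size with 2m* ≤ m. For a candidate c, let app(c) denote the number of votes of V* containing c. Let X ⊆ C with |X| = m* be a set of m* candidates with the largest approval counts, i.e., app(c′) ≤ app(c) for every c ∈ X and every c′ ∈ C ∖ X. Then Σ_{S∈V*} |X Δ S| ≤ (m − m*)·n*. -/
open scoped symmDiff

/-!
Among committees of a given size, the ones made of the most approved candidates minimise the
minisum score. Since `2 * #X ≤ m`, there is a committee `Y` of the same size disjoint from `X`, so
it is enough to bound the average of the scores of `X` and `Y`. In a single vote, each candidate of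
`X ∪ Y` contributes exactly one to the two scores together and every other candidate contributes
at most two, which gives at most `2 * #X + 2 * (m - 2 * #X) = 2 * (m - #X)`.
-/

section

open Finset

variable {ι α β M : Type*}

section SumComparison

variable [AddCommMonoid M] [PartialOrder M] [IsOrderedAddMonoid M]

theorem sum_le_sum_of_card_eq_of_forall_le {s : Finset α} {t : Finset β} {f : α → M} {g : β → M}
    (hcard : #s = #t) (hle : ∀ a ∈ s, ∀ b ∈ t, f a ≤ g b) : ∑ a ∈ s, f a ≤ ∑ b ∈ t, g b := by
  let e : s ≃ t := equivOfCardEq hcard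
  calc ∑ a ∈ s, f a = ∑ a : s, f a := (sum_coe_sort s f).symm
    _ ≤ ∑ a : s, g (e a) := sum_le_sum fun a _ ↦ hle a a.2 (e a) (e a).2
    _ = ∑ b : t, g b := e.sum_comp fun b : t ↦ g b
    _ = ∑ b ∈ t, g b := sum_coe_sort t g

theorem sum_le_sum_of_card_eq_of_forall_notMem_le {s t : Finset α} {f : α → M}
    (hcard : #s = #t) (htop : ∀ a ∈ t, ∀ b ∉ t, f b ≤ f a) : ∑ a ∈ s, f a ≤ ∑ a ∈ t, f a := by
  classical
  have hdiff : ∑ a ∈ s \ t, f a ≤ ∑ a ∈ t \ s, f a :=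
    sum_le_sum_of_card_eq_of_forall_le (card_sdiff_comm hcard) fun b hb a ha ↦
      htop a (mem_sdiff.1 ha).1 b (mem_sdiff.1 hb).2
  calc ∑ a ∈ s, f a = ∑ a ∈ s ∩ t, f a + ∑ a ∈ s \ t, f a := (sum_inter_add_sum_sdiff s t f).symm
    _ ≤ ∑ a ∈ t ∩ s, f a + ∑ a ∈ t \ s, f a := by rw [inter_comm]; gcongr
    _ = ∑ a ∈ t, f a := sum_inter_add_sum_sdiff t s f

end SumComparison

section SymmDiff

variable [DecidableEq α]

theorem card_symmDiff_eq_card_sdiff_add_card_sdiff (s t : Finset α) :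
    #(s ∆ t) = #(s \ t) + #(t \ s) :=
  card_union_of_disjoint disjoint_sdiff_sdiff

theorem card_symmDiff_add_two_mul_card_inter (s t : Finset α) :
    #(s ∆ t) + 2 * #(s ∩ t) = #s + #t := by
  have hs := card_sdiff_add_card_inter s t
  have ht := card_sdiff_add_card_inter t s
  rw [inter_comm] at ht
  rw [card_symmDiff_eq_card_sdiff_add_card_sdiff]
  omega

theorem card_symmDiff_add_card_symmDiff_of_disjoint {s t : Finset α} (hst : Disjoint s t)
    (u : Finset α) : #(s ∆ u) + #(t ∆ u) = #(s ∪ t) + 2 * #(u \ (s ∪ t)) := by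
  have hs := card_symmDiff_add_two_mul_card_inter s u
  have ht := card_symmDiff_add_two_mul_card_inter t u
  have hunion := card_union_of_disjoint hst
  have hinter : #((s ∪ t) ∩ u) = #(s ∩ u) + #(t ∩ u) := by
    rw [union_inter_distrib_right,
      card_union_of_disjoint (hst.mono inter_subset_left inter_subset_left)]
  have hu := card_sdiff_add_card_inter u (s ∪ t)
  rw [inter_comm] at hu
  omega

theorem card_symmDiff_add_card_symmDiff_le_of_disjoint [Fintype α] {s t : Finset α}
    (hst : Disjoint s t) (u : Finset α) :
    #(s ∆ u) + #(t ∆ u) ≤ #(s ∪ t) + 2 * #(s ∪ t)ᶜ := by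
  rw [card_symmDiff_add_card_symmDiff_of_disjoint hst, sdiff_eq_inter_compl]
  gcongr
  exact inter_subset_right

end SymmDiff

variable [Fintype ι] [DecidableEq α]

/-- The number of votes of the family `V` that approve the candidate `c`. -/
def approvalCount (V : ι → Finset α) (c : α) : ℕ := #{i | c ∈ V i}

/-- The minisum score of the committee `X`: its total Hamming distance to the votes of `V`. -/
def minisumScore (V : ι → Finset α) (X : Finset α) : ℕ := ∑ i, #(X ∆ V i)

theorem sum_card_inter_eq_sum_approvalCount (V : ι → Finset α) (X : Finset α) :
    ∑ i, #(X ∩ V i) = ∑ c ∈ X, approvalCount V c := by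
  simp_rw [← filter_mem_eq_inter]
  exact (sum_card_bipartiteAbove_eq_sum_card_bipartiteBelow fun c i ↦ c ∈ V i).symm

theorem minisumScore_add_two_mul_sum_approvalCount (V : ι → Finset α) (X : Finset α) :
    minisumScore V X + 2 * ∑ c ∈ X, approvalCount V c = Fintype.card ι * #X + ∑ i, #(V i) := by
  calc minisumScore V X + 2 * ∑ c ∈ X, approvalCount V c
      = ∑ i, (#(X ∆ V i) + 2 * #(X ∩ V i)) := by
        rw [← sum_card_inter_eq_sum_approvalCount, minisumScore, mul_sum, sum_add_distrib]
    _ = ∑ i, (#X + #(V i)) := by simp only [card_symmDiff_add_two_mul_card_inter]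
    _ = Fintype.card ι * #X + ∑ i, #(V i) := by
        rw [sum_add_distrib, sum_const, card_univ, smul_eq_mul]

theorem minisumScore_le_of_forall_approvalCount_le {V : ι → Finset α} {X Y : Finset α}
    (hcard : #Y = #X) (htop : ∀ c ∈ X, ∀ c' ∉ X, approvalCount V c' ≤ approvalCount V c) :
    minisumScore V X ≤ minisumScore V Y := by
  have hX := minisumScore_add_two_mul_sum_approvalCount V X
  have hY := minisumScore_add_two_mul_sum_approvalCount V Y
  have happrovals := sum_le_sum_of_card_eq_of_forall_notMem_le hcard htop
  rw [hcard] at hY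
  omega

variable [Fintype α]

theorem minisumScore_add_minisumScore_le_of_disjoint (V : ι → Finset α) {X Y : Finset α}
    (hXY : Disjoint X Y) :
    minisumScore V X + minisumScore V Y ≤ (#(X ∪ Y) + 2 * #(X ∪ Y)ᶜ) * Fintype.card ι := by
  rw [minisumScore, minisumScore, ← sum_add_distrib, mul_comm]
  exact sum_le_card_nsmul _ _ _ fun i _ ↦
    card_symmDiff_add_card_symmDiff_le_of_disjoint hXY (V i)

theorem stmt_16_general (V : ι → Finset α) (X : Finset α) (hX : 2 * #X ≤ Fintype.card α)
    (htop : ∀ c ∈ X, ∀ c' ∉ X, approvalCount V c' ≤ approvalCount V c) :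
    minisumScore V X ≤ (Fintype.card α - #X) * Fintype.card ι := by
  obtain ⟨Y, hYX, hcard⟩ : ∃ Y ⊆ Xᶜ, #Y = #X :=
    exists_subset_card_eq (by rw [card_compl]; omega)
  have hdisj : Disjoint X Y := subset_compl_iff_disjoint_left.1 hYX
  have hcount : #(X ∪ Y) + 2 * #(X ∪ Y)ᶜ = 2 * (Fintype.card α - #X) := by
    rw [card_compl, card_union_of_disjoint hdisj, hcard]
    omega
  have hopt : minisumScore V X ≤ minisumScore V Y :=
    minisumScore_le_of_forall_approvalCount_le hcard htop
  have havg := minisumScore_add_minisumScore_le_of_disjoint V hdisj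
  rw [hcount, mul_assoc] at havg
  omega

end

/-- `V` is a family of `nstar` votes over a candidate set `Fin m`, and
`2·mstar ≤ m`. If `X` is a set of `mstar` candidates with the largest approval
counts, then the minisum score of `X` satisfies
`∑_{S ∈ V} |X ∆ S| ≤ (m − mstar)·nstar`. -/
theorem stmt_16 (m nstar mstar : ℕ) (h2m : 2 * mstar ≤ m)
    (V : Fin nstar → Finset (Fin m))
    (X : Finset (Fin m)) (hX : X.card = mstar)
    (htop : ∀ c ∈ X, ∀ c' ∉ X,
      (Finset.univ.filter fun i => c' ∈ V i).card ≤
        (Finset.univ.filter fun i => c ∈ V i).card) :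
    ∑ i, (X ∆ V i).card ≤ (m - mstar) * nstar := by
  subst hX
  simpa only [minisumScore, Fintype.card_fin] using
    stmt_16_general V X (by rwa [Fintype.card_fin]) htop
end
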